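/- arXiv:1712.03638 — 2 statements merged into one kernel-verified Lean document; each statement's English description precedes it below -/
import Mathlib

section
/- Let a ~ N(0, I_n) and V a symmetric n×n matrix with ‖V‖_F = 1. Then P(|⟨aaᵀ − I, V⟩|² ≥ 1) ≥ c₀ for a universal constant c₀ > 0 (one may take c₀ = 1/324). -/
open MeasureTheory ProbabilityTheory

/-!
In an orthonormal eigenbasis of `V` the chaos `⟨aaᵀ - I, V⟩` becomes `∑ λᵢ (xᵢ² - 1)`, a sum of
independent centred variables. Each summand has fourth moment `15` times its squared variance, and a
bound `E X⁴ ≤ K (Var X)²` with `3 ≤ K` is inherited by sums of independent centred variables. Hence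
the chaos satisfies it with `K = 15`, where general second-order hypercontractivity would give `81`,
and the Paley–Zygmund inequality applied to its square yields the small-ball bound.
-/

open scoped Nat NNReal ENNReal Matrix

section PaleyZygmund

variable {Ω : Type*} {mΩ : MeasurableSpace Ω} {μ : Measure Ω} {X : Ω → ℝ}

lemma sq_integral_le_measureReal_univ_mul_integral_sq [IsFiniteMeasure μ] (hX : MemLp X 2 μ) :
    (∫ ω, X ω ∂μ) ^ 2 ≤ μ.real Set.univ * ∫ ω, X ω ^ 2 ∂μ := by
  have hquad (t : ℝ) :
      0 ≤ μ.real Set.univ * (t * t) + -2 * (∫ ω, X ω ∂μ) * t + ∫ ω, X ω ^ 2 ∂μ := by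
    have hX1 : Integrable X μ := hX.integrable one_le_two
    calc
      0 ≤ ∫ ω, (t * t + -2 * t * X ω + X ω ^ 2) ∂μ :=
        integral_nonneg fun ω ↦ (sq_nonneg (t - X ω)).trans_eq (by ring)
      _ = _ := by
        rw [integral_add (by fun_prop) hX.integrable_sq, integral_add (by fun_prop) (by fun_prop),
          integral_const, integral_const_mul, smul_eq_mul]
        ring
  have hdiscrim := discrim_le_zero hquad
  rw [discrim] at hdiscrim
  linarith

theorem paley_zygmund [IsProbabilityMeasure μ] (hX : MemLp X 2 μ) (hmean : 0 ≤ μ[X]) {θ : ℝ}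
    (hθ₀ : 0 ≤ θ) (hθ₁ : θ ≤ 1) :
    (1 - θ) ^ 2 * μ[X] ^ 2 ≤ μ.real {ω | θ * μ[X] ≤ X ω} * ∫ ω, X ω ^ 2 ∂μ := by
  set A : Set Ω := {ω | θ * μ[X] ≤ X ω}
  have hA : NullMeasurableSet A μ := nullMeasurableSet_le aemeasurable_const hX.1.aemeasurable
  have hX1 : Integrable X μ := hX.integrable one_le_two
  have hcompl : ∫ ω in Aᶜ, X ω ∂μ ≤ θ * μ[X] := calc
    ∫ ω in Aᶜ, X ω ∂μ ≤ ∫ _ in Aᶜ, θ * μ[X] ∂μ :=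
      setIntegral_mono_on₀ hX1.integrableOn (integrable_const _) hA.compl
        fun ω (hω : ¬ θ * μ[X] ≤ X ω) ↦ (not_le.mp hω).le
    _ = μ.real Aᶜ * (θ * μ[X]) := by rw [setIntegral_const, smul_eq_mul]
    _ ≤ θ * μ[X] := mul_le_of_le_one_left (by positivity) measureReal_le_one
  have hlower : (1 - θ) * μ[X] ≤ ∫ ω in A, X ω ∂μ := by
    linarith [integral_add_compl₀ hA hX1]
  calc
    (1 - θ) ^ 2 * μ[X] ^ 2 = ((1 - θ) * μ[X]) ^ 2 := by ring
    _ ≤ (∫ ω in A, X ω ∂μ) ^ 2 :=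
      pow_le_pow_left₀ (mul_nonneg (sub_nonneg.mpr hθ₁) hmean) hlower 2
    _ ≤ μ.real A * ∫ ω in A, X ω ^ 2 ∂μ := by
      simpa only [measureReal_restrict_apply_univ] using
        sq_integral_le_measureReal_univ_mul_integral_sq (hX.restrict A)
    _ ≤ μ.real A * ∫ ω, X ω ^ 2 ∂μ :=
      mul_le_mul_of_nonneg_left
        (setIntegral_le_integral hX.integrable_sq (ae_of_all _ fun ω ↦ sq_nonneg (X ω)))
        measureReal_nonneg

lemma memLp_pow {p : ℝ≥0∞} {n : ℕ} (hn : n ≠ 0) (hX : MemLp X (p * n) μ) :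
    MemLp (fun ω ↦ X ω ^ n) p μ := by
  have hnorm := hX.norm_rpow_div n
  rw [ENNReal.mul_div_cancel_right (mod_cast hn) (ENNReal.natCast_ne_top n)] at hnorm
  exact (memLp_norm_iff (hX.1.pow n)).mp (by simpa using hnorm)

theorem le_measureReal_le_sq_of_fourth_moment_le [IsProbabilityMeasure μ] (hX : MemLp X 4 μ)
    (hmean : μ[X] = 0) {K : ℝ} (hK : 1 ≤ K) (hfourth : ∫ ω, X ω ^ 4 ∂μ ≤ K * Var[X; μ] ^ 2)
    {θ : ℝ} (hθ₀ : 0 ≤ θ) (hθ₁ : θ ≤ 1) :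
    (1 - θ) ^ 2 / K ≤ μ.real {ω | θ * Var[X; μ] ≤ X ω ^ 2} := by
  have hvar : Var[X; μ] = ∫ ω, X ω ^ 2 ∂μ :=
    variance_of_integral_eq_zero hX.1.aemeasurable hmean
  rw [div_le_iff₀ (by positivity)]
  rcases (variance_nonneg X μ).eq_or_lt with hzero | hpos
  · simp only [← hzero, mul_zero, sq_nonneg, Set.ofPred_true, probReal_univ, one_mul]
    nlinarith
  · have hX2 : MemLp (fun ω ↦ X ω ^ 2) 2 μ := memLp_pow two_ne_zero (by norm_num; exact hX)
    have hpz := paley_zygmund hX2 (integral_nonneg fun ω ↦ sq_nonneg (X ω)) hθ₀ hθ₁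
    simp only [← hvar, ← pow_mul, Nat.reduceMul] at hpz
    refine le_of_mul_le_mul_right ?_ (pow_pos hpos 2)
    calc
      (1 - θ) ^ 2 * Var[X; μ] ^ 2 ≤ μ.real {ω | θ * Var[X; μ] ≤ X ω ^ 2} * ∫ ω, X ω ^ 4 ∂μ := hpz
      _ ≤ μ.real {ω | θ * Var[X; μ] ≤ X ω ^ 2} * (K * Var[X; μ] ^ 2) := by gcongr
      _ = μ.real {ω | θ * Var[X; μ] ≤ X ω ^ 2} * K * Var[X; μ] ^ 2 := by ring

end PaleyZygmund

section IndependentSums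

variable {Ω : Type*} {mΩ : MeasurableSpace Ω} {μ : Measure Ω}

lemma integrable_pow_of_memLp [IsFiniteMeasure μ] {X : Ω → ℝ} {k n : ℕ} (hX : MemLp X n μ)
    (hkn : k ≤ n) :
    Integrable (fun ω ↦ X ω ^ k) μ := by
  have hnorm := (hX.mono_exponent (mod_cast hkn : (k : ℝ≥0∞) ≤ n)).integrable_norm_pow'
  exact (integrable_norm_iff (hX.1.pow k)).mp (by simpa using hnorm)

theorem integral_add_pow_of_indepFun [IsFiniteMeasure μ] {X Y : Ω → ℝ} (hXY : IndepFun X Y μ)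
    {n : ℕ} (hX : MemLp X n μ) (hY : MemLp Y n μ) :
    ∫ ω, (X ω + Y ω) ^ n ∂μ = ∑ k ∈ Finset.range (n + 1),
      (∫ ω, X ω ^ k ∂μ) * (∫ ω, Y ω ^ (n - k) ∂μ) * n.choose k := by
  have hindep (k : ℕ) : IndepFun (fun ω ↦ X ω ^ k) (fun ω ↦ Y ω ^ (n - k)) μ :=
    hXY.comp (measurable_id.pow_const k) (measurable_id.pow_const (n - k))
  have hXk {k : ℕ} (hk : k ∈ Finset.range (n + 1)) : Integrable (fun ω ↦ X ω ^ k) μ :=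
    integrable_pow_of_memLp hX (Finset.mem_range_succ_iff.mp hk)
  have hYk (k : ℕ) : Integrable (fun ω ↦ Y ω ^ (n - k)) μ :=
    integrable_pow_of_memLp hY (n.sub_le k)
  have hprod {k : ℕ} (hk : k ∈ Finset.range (n + 1)) :
      Integrable (fun ω ↦ X ω ^ k * Y ω ^ (n - k)) μ :=
    (hindep k).integrable_mul (hXk hk) (hYk k)
  simp only [add_pow]
  rw [integral_finsetSum _ fun k hk ↦ (hprod hk).mul_const _]
  refine Finset.sum_congr rfl fun k hk ↦ ?_
  rw [integral_mul_const, (hindep k).integral_fun_mul_eq_mul_integral (hXk hk).1 (hYk k).1]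

variable [IsProbabilityMeasure μ]

lemma integral_add_pow_four_of_indepFun {X Y : Ω → ℝ} (hXY : IndepFun X Y μ)
    (hX : MemLp X 4 μ) (hY : MemLp Y 4 μ) (hX₀ : μ[X] = 0) (hY₀ : μ[Y] = 0) :
    ∫ ω, (X ω + Y ω) ^ 4 ∂μ =
      ∫ ω, X ω ^ 4 ∂μ + 6 * Var[X; μ] * Var[Y; μ] + ∫ ω, Y ω ^ 4 ∂μ := by
  rw [integral_add_pow_of_indepFun hXY hX hY, variance_of_integral_eq_zero hX.1.aemeasurable hX₀,
    variance_of_integral_eq_zero hY.1.aemeasurable hY₀]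
  simp only [Finset.sum_range_succ, Finset.sum_range_zero, Nat.reduceAdd, Nat.reduceSub, Nat.choose,
    pow_zero, pow_one, hX₀, hY₀, integral_const, probReal_univ, one_smul]
  ring

theorem integral_sum_pow_four_le_of_iIndepFun {ι : Type*} {X : ι → Ω → ℝ} (hindep : iIndepFun X μ)
    (hX : ∀ i, MemLp (X i) 4 μ) (hmean : ∀ i, μ[X i] = 0) {K : ℝ} (hK : 3 ≤ K)
    (hfourth : ∀ i, ∫ ω, X i ω ^ 4 ∂μ ≤ K * Var[X i; μ] ^ 2) (s : Finset ι) :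
    ∫ ω, (∑ i ∈ s, X i) ω ^ 4 ∂μ ≤ K * Var[∑ i ∈ s, X i; μ] ^ 2 := by
  classical
  induction s using Finset.induction_on with
  | empty => simp
  | insert j s hj ih =>
    have hS : MemLp (∑ i ∈ s, X i) 4 μ := memLp_finsetSum' s fun i _ ↦ hX i
    have hS₀ : μ[∑ i ∈ s, X i] = 0 := by
      simp only [Finset.sum_apply]
      rw [integral_finsetSum s fun i _ ↦ (hX i).integrable (by norm_num)]
      exact Finset.sum_eq_zero fun i _ ↦ hmean i
    have hjS : IndepFun (X j) (∑ i ∈ s, X i) μ :=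
      (hindep.indepFun_finsetSum_of_notMem₀ (fun i ↦ (hX i).1.aemeasurable) hj).symm
    have h24 : (2 : ℝ≥0∞) ≤ 4 := by norm_num
    rw [Finset.sum_insert hj,
      hjS.variance_add ((hX j).mono_exponent h24) (hS.mono_exponent h24)]
    calc
      ∫ ω, (X j + ∑ i ∈ s, X i) ω ^ 4 ∂μ
          = ∫ ω, X j ω ^ 4 ∂μ + 6 * Var[X j; μ] * Var[∑ i ∈ s, X i; μ]
              + ∫ ω, (∑ i ∈ s, X i) ω ^ 4 ∂μ :=
        integral_add_pow_four_of_indepFun hjS (hX j) hS (hmean j) hS₀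
      _ ≤ K * Var[X j; μ] ^ 2 + 2 * K * (Var[X j; μ] * Var[∑ i ∈ s, X i; μ])
              + K * Var[∑ i ∈ s, X i; μ] ^ 2 := by
        have hprod := mul_nonneg (variance_nonneg (X j) μ) (variance_nonneg (∑ i ∈ s, X i) μ)
        nlinarith [hfourth j]
      _ = K * (Var[X j; μ] + Var[∑ i ∈ s, X i; μ]) ^ 2 := by ring

theorem integral_sum_pow_four_le_pi {ι : Type*} [Fintype ι] {Ω : ι → Type*}
    {mΩ : ∀ i, MeasurableSpace (Ω i)} {μ : ∀ i, Measure (Ω i)} [∀ i, IsProbabilityMeasure (μ i)]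
    {X : ∀ i, Ω i → ℝ} (hX : ∀ i, MemLp (X i) 4 (μ i)) (hmean : ∀ i, (μ i)[X i] = 0) {K : ℝ}
    (hK : 3 ≤ K) (hfourth : ∀ i, ∫ ω, X i ω ^ 4 ∂μ i ≤ K * Var[X i; μ i] ^ 2) :
    ∫ ω, (∑ i, fun ω : ∀ i, Ω i ↦ X i (ω i)) ω ^ 4 ∂Measure.pi μ ≤
      K * Var[∑ i, fun ω : ∀ i, Ω i ↦ X i (ω i); Measure.pi μ] ^ 2 := by
  have heval (i : ι) := measurePreserving_eval μ i
  refine integral_sum_pow_four_le_of_iIndepFun (iIndepFun_pi fun i ↦ (hX i).1.aemeasurable)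
    (fun i ↦ (hX i).comp_measurePreserving (heval i))
    (fun i ↦ (integral_comp_eval (hX i).1).trans (hmean i)) hK (fun i ↦ ?_) Finset.univ
  calc
    ∫ ω, X i (ω i) ^ 4 ∂Measure.pi μ = ∫ ω, X i ω ^ 4 ∂μ i := integral_comp_eval ((hX i).1.pow 4)
    _ ≤ K * Var[X i; μ i] ^ 2 := hfourth i
    _ = K * Var[fun ω ↦ X i (ω i); Measure.pi μ] ^ 2 := by
      rw [(heval i).variance_fun_comp (hX i).1.aemeasurable]

end IndependentSums

section GaussianMoments

variable {m : ℝ} {v : ℝ≥0}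

lemma hasDerivAt_gaussianPDFReal (hv : v ≠ 0) (x : ℝ) :
    HasDerivAt (gaussianPDFReal m v) (-((x - m) / v) * gaussianPDFReal m v x) x := by
  have hexponent : HasDerivAt (fun y : ℝ ↦ -(y - m) ^ 2 / (2 * v)) (-((x - m) / v)) x :=
    ((((hasDerivAt_id x).sub_const m).fun_pow 2).fun_neg.div_const _).congr_deriv (by
      simp only [Nat.cast_ofNat, id_eq, Nat.add_one_sub_one, pow_one, mul_one]
      field_simp)
  rw [gaussianPDFReal_def]
  exact (hexponent.exp.const_mul _).congr_deriv (by ring)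

lemma integrable_gaussianReal_iff (hv : v ≠ 0) {f : ℝ → ℝ} :
    Integrable f (gaussianReal m v) ↔ Integrable fun x ↦ gaussianPDFReal m v x * f x := by
  rw [gaussianReal_of_var_ne_zero m hv, integrable_withDensity_iff_integrable_smul'
    (measurable_gaussianPDF m v) (ae_of_all _ fun _ ↦ gaussianPDF_lt_top)]
  simp only [toReal_gaussianPDF, smul_eq_mul]

theorem integral_sub_mean_mul_gaussianReal {f f' : ℝ → ℝ} (hderiv : ∀ x, HasDerivAt f (f' x) x)
    (hf : Integrable f (gaussianReal m v)) (hf' : Integrable f' (gaussianReal m v))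
    (hxf : Integrable (fun x ↦ (x - m) * f x) (gaussianReal m v)) :
    ∫ x, (x - m) * f x ∂gaussianReal m v = v * ∫ x, f' x ∂gaussianReal m v := by
  rcases eq_or_ne v 0 with rfl | hv
  · simp
  rw [integrable_gaussianReal_iff hv] at hf hf' hxf
  have hv' : (v : ℝ) ≠ 0 := mod_cast hv
  have hparts := integral_eq_zero_of_hasDerivAt_of_integrable
    (f' := fun x ↦ v * (gaussianPDFReal m v x * f' x) - gaussianPDFReal m v x * ((x - m) * f x))
    (fun x ↦ (((hasDerivAt_gaussianPDFReal hv x).fun_mul (hderiv x)).const_mul (v : ℝ)).congr_deriv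
      (by field_simp; ring))
    ((hf'.const_mul _).sub hxf) (hf.const_mul _)
  rw [integral_sub (hf'.const_mul _) hxf, integral_const_mul] at hparts
  simp only [integral_gaussianReal_eq_integral_smul hv, smul_eq_mul]
  linarith

lemma memLp_pow_gaussianReal (k : ℕ) {p : ℝ≥0∞} (hp : p ≠ ∞) :
    MemLp (fun x ↦ x ^ k) p (gaussianReal m v) := by
  rcases eq_or_ne k 0 with rfl | hk
  · simpa using memLp_const (1 : ℝ)
  · exact memLp_pow hk
      (memLp_id_gaussianReal' _ (ENNReal.mul_ne_top hp (ENNReal.natCast_ne_top k)))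

lemma integrable_pow_gaussianReal (k : ℕ) : Integrable (fun x ↦ x ^ k) (gaussianReal m v) :=
  memLp_one_iff_integrable.mp (memLp_pow_gaussianReal k ENNReal.one_ne_top)

lemma integral_pow_add_two_gaussianReal (k : ℕ) :
    ∫ x, x ^ (k + 2) ∂gaussianReal 0 v = v * (k + 1) * ∫ x, x ^ k ∂gaussianReal 0 v := by
  have hstein := integral_sub_mean_mul_gaussianReal (m := 0) (v := v)
    (f := fun x ↦ x ^ (k + 1)) (f' := fun x ↦ (k + 1) * x ^ k)
    (fun x ↦ by simpa using hasDerivAt_pow (k + 1) x)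
    (integrable_pow_gaussianReal _) ((integrable_pow_gaussianReal _).const_mul _)
    (by simpa only [sub_zero, ← pow_succ'] using integrable_pow_gaussianReal (k + 2))
  simpa only [sub_zero, ← pow_succ', integral_const_mul, ← mul_assoc] using hstein

theorem integral_even_pow_gaussianReal (k : ℕ) :
    ∫ x, x ^ (2 * k) ∂gaussianReal 0 v = v ^ k * (2 * k - 1)‼ := by
  induction k with
  | zero => simp
  | succ k ih =>
    have hfactorial : (2 * k + 2 - 1)‼ = (2 * k + 1) * (2 * k - 1)‼ :=
      Nat.doubleFactorial_add_one (2 * k)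
    rw [mul_add, mul_one, integral_pow_add_two_gaussianReal, ih, hfactorial]
    push_cast
    ring

theorem integral_sq_sub_pow_gaussianReal (c : ℝ) (n : ℕ) :
    ∫ x, (x ^ 2 - c) ^ n ∂gaussianReal 0 v = ∑ k ∈ Finset.range (n + 1),
      v ^ k * (2 * k - 1)‼ * (-c) ^ (n - k) * n.choose k := by
  simp only [sub_eq_add_neg, add_pow, ← pow_mul]
  rw [integral_finsetSum _ fun k _ ↦
    ((integrable_pow_gaussianReal (2 * k)).mul_const _).mul_const _]
  simp only [integral_mul_const, integral_even_pow_gaussianReal]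

lemma memLp_sq_sub_gaussianReal (c : ℝ) {p : ℝ≥0∞} (hp : p ≠ ∞) :
    MemLp (fun x ↦ x ^ 2 - c) p (gaussianReal m v) :=
  (memLp_pow_gaussianReal 2 hp).sub (memLp_const c)

lemma integral_sq_sub_variance_gaussianReal : ∫ x, (x ^ 2 - v) ∂gaussianReal 0 v = 0 := by
  simpa [Finset.sum_range_succ] using integral_sq_sub_pow_gaussianReal (v := v) v 1

lemma variance_sq_sub_variance_gaussianReal :
    Var[fun x ↦ x ^ 2 - v; gaussianReal 0 v] = 2 * v ^ 2 := by
  rw [variance_of_integral_eq_zero (by fun_prop) integral_sq_sub_variance_gaussianReal,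
    integral_sq_sub_pow_gaussianReal]
  simp only [Finset.sum_range_succ, Finset.sum_range_zero, Nat.doubleFactorial, Nat.choose,
    Nat.reduceMul, Nat.reduceSub]
  push_cast
  ring

lemma integral_sq_sub_variance_pow_four_gaussianReal :
    ∫ x, (x ^ 2 - v) ^ 4 ∂gaussianReal 0 v = 60 * v ^ 4 := by
  rw [integral_sq_sub_pow_gaussianReal]
  simp only [Finset.sum_range_succ, Finset.sum_range_zero, Nat.doubleFactorial, Nat.choose,
    Nat.reduceMul, Nat.reduceSub]
  push_cast
  ring

lemma integral_mul_sq_sub_one_gaussianReal (c : ℝ) :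
    ∫ x, c * (x ^ 2 - 1) ∂gaussianReal 0 1 = 0 := by
  have hmean := integral_sq_sub_variance_gaussianReal (v := 1)
  rw [integral_const_mul, ← NNReal.coe_one, hmean, mul_zero]

lemma variance_mul_sq_sub_one_gaussianReal (c : ℝ) :
    Var[fun x ↦ c * (x ^ 2 - 1); gaussianReal 0 1] = 2 * c ^ 2 := by
  have hvar := variance_sq_sub_variance_gaussianReal (v := 1)
  simp only [NNReal.coe_one, one_pow, mul_one] at hvar
  rw [variance_const_mul, hvar, mul_comm]

lemma integral_mul_sq_sub_one_pow_four_gaussianReal (c : ℝ) :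
    ∫ x, (c * (x ^ 2 - 1)) ^ 4 ∂gaussianReal 0 1 = 60 * c ^ 4 := by
  have hfourth := integral_sq_sub_variance_pow_four_gaussianReal (v := 1)
  simp only [NNReal.coe_one, one_pow, mul_one] at hfourth
  simp only [mul_pow]
  rw [integral_const_mul, hfourth, mul_comm]

lemma memLp_mul_sq_sub_one_gaussianReal (c : ℝ) {p : ℝ≥0∞} (hp : p ≠ ∞) :
    MemLp (fun x ↦ c * (x ^ 2 - 1)) p (gaussianReal 0 1) :=
  (memLp_sq_sub_gaussianReal 1 hp).const_mul c

end GaussianMoments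

section Matrices

variable {ι : Type*} [Fintype ι]

lemma sum_sum_sq_eq_trace_mul_self {R : Type*} [Semiring R] {A : Matrix ι ι R} (hA : A.IsSymm) :
    ∑ i, ∑ j, A i j ^ 2 = (A * A).trace := by
  simp only [Matrix.trace, Matrix.diag, Matrix.mul_apply, sq, hA.apply]

variable [DecidableEq ι]

lemma trace_conjStarAlgAut {R : Type*} [CommRing R] [StarRing R]
    (U : Matrix.unitaryGroup ι R) (A : Matrix ι ι R) :
    (Unitary.conjStarAlgAut R _ U A).trace = A.trace := by
  rw [Unitary.conjStarAlgAut_apply, Matrix.trace_mul_cycle, Unitary.star_mul_self_of_mem U.2,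
    one_mul]

lemma sum_sum_sq_eq_sum_eigenvalues_sq {A : Matrix ι ι ℝ} (hA : A.IsHermitian) :
    ∑ i, ∑ j, A i j ^ 2 = ∑ i, hA.eigenvalues i ^ 2 := by
  rw [sum_sum_sq_eq_trace_mul_self (Matrix.isHermitian_iff_isSymm.mp hA),
    ← trace_conjStarAlgAut (star hA.eigenvectorUnitary), map_mul,
    hA.conjStarAlgAut_star_eigenvectorUnitary, Matrix.diagonal_mul_diagonal, Matrix.trace_diagonal]
  simp only [Function.comp_apply, RCLike.ofReal_real_eq_id, id_eq, sq]

end Matrices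

/-- The standard Gaussian measure on `ι → ℝ`: the law of a family of independent `N(0, 1)`
coordinates. It lives on the plain function type rather than on `EuclideanSpace ℝ ι`, where Mathlib
has `stdGaussian`. -/
noncomputable abbrev stdGaussianPi (ι : Type*) [Fintype ι] : Measure (ι → ℝ) :=
  Measure.pi fun _ : ι ↦ gaussianReal 0 1

lemma measurePreserving_mulVec_stdGaussianPi {ι : Type*} [Fintype ι] [DecidableEq ι]
    (U : Matrix.unitaryGroup ι ℝ) :
    MeasurePreserving (fun x ↦ (U : Matrix ι ι ℝ) *ᵥ x) (stdGaussianPi ι) (stdGaussianPi ι) := by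
  have htoLp : MeasurePreserving (MeasurableEquiv.toLp 2 (ι → ℝ)) (stdGaussianPi ι)
      (stdGaussian (EuclideanSpace ℝ ι)) :=
    ⟨MeasurableEquiv.measurable _, map_pi_eq_stdGaussian⟩
  let rotation : EuclideanSpace ℝ ι ≃ₗᵢ[ℝ] EuclideanSpace ℝ ι :=
    Unitary.linearIsometryEquiv
      ⟨Matrix.toEuclideanCLM (n := ι) (𝕜 := ℝ) U, Unitary.map_mem Matrix.toEuclideanCLM U.2⟩
  have hrotation : MeasurePreserving rotation (stdGaussian (EuclideanSpace ℝ ι))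
      (stdGaussian (EuclideanSpace ℝ ι)) :=
    ⟨by fun_prop, stdGaussian_map rotation⟩
  exact htoLp.symm.comp (hrotation.comp htoLp)

section SecondChaos

variable {ι : Type*} [Fintype ι]

/-- The chaos `⟨x xᵀ - I, A⟩` of the matrix `A`, with respect to the Frobenius inner product. It is
centred when `x` is a standard Gaussian vector. -/
def secondChaos (A : Matrix ι ι ℝ) (x : ι → ℝ) : ℝ :=
  (∑ i, ∑ j, x i * A i j * x j) - A.trace

lemma measurable_secondChaos (A : Matrix ι ι ℝ) : Measurable (secondChaos A) := by
  unfold secondChaos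
  fun_prop

lemma secondChaos_eq_dotProduct_mulVec_sub_trace (A : Matrix ι ι ℝ) (x : ι → ℝ) :
    secondChaos A x = x ⬝ᵥ A *ᵥ x - A.trace := by
  rw [secondChaos, Matrix.dot_mulVec_eq_sum_sum, Finset.sum_comm]

end SecondChaos

section DiagonalChaos

variable {ι : Type*} [Fintype ι] [DecidableEq ι] (l : ι → ℝ)

lemma secondChaos_diagonal :
    secondChaos (Matrix.diagonal l) = ∑ i, fun x ↦ l i * (x i ^ 2 - 1) := by
  ext x
  simp only [secondChaos_eq_dotProduct_mulVec_sub_trace, Matrix.mulVec_diagonal, dotProduct,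
    Matrix.trace_diagonal, Finset.sum_apply, ← Finset.sum_sub_distrib]
  exact Finset.sum_congr rfl fun i _ ↦ by ring

lemma memLp_secondChaos_diagonal {p : ℝ≥0∞} (hp : p ≠ ∞) :
    MemLp (secondChaos (Matrix.diagonal l)) p (stdGaussianPi ι) := by
  rw [secondChaos_diagonal]
  exact memLp_finsetSum' _ fun i _ ↦
    (memLp_mul_sq_sub_one_gaussianReal (l i) hp).comp_measurePreserving
      (measurePreserving_eval (fun _ ↦ gaussianReal 0 1) i)

lemma integral_secondChaos_diagonal :
    (stdGaussianPi ι)[secondChaos (Matrix.diagonal l)] = 0 := by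
  have hintegrable (i : ι) : Integrable (fun t ↦ l i * (t ^ 2 - 1)) (gaussianReal 0 1) :=
    memLp_one_iff_integrable.mp (memLp_mul_sq_sub_one_gaussianReal (l i) ENNReal.one_ne_top)
  have hmean (i : ι) : ∫ x, l i * (x i ^ 2 - 1) ∂stdGaussianPi ι = 0 := by
    rw [← integral_mul_sq_sub_one_gaussianReal (l i)]
    exact integral_comp_eval (μ := fun _ : ι ↦ gaussianReal 0 1) (hintegrable i).1
  simp only [secondChaos_diagonal, Finset.sum_apply]
  rw [integral_finsetSum _ fun i _ ↦
    integrable_comp_eval (μ := fun _ : ι ↦ gaussianReal 0 1) (hintegrable i)]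
  exact Finset.sum_eq_zero fun i _ ↦ hmean i

lemma variance_secondChaos_diagonal :
    Var[secondChaos (Matrix.diagonal l); stdGaussianPi ι] = 2 * ∑ i, l i ^ 2 := by
  rw [secondChaos_diagonal, variance_sum_pi fun i ↦
    memLp_mul_sq_sub_one_gaussianReal (l i) ENNReal.ofNat_ne_top, Finset.mul_sum]
  simp only [variance_mul_sq_sub_one_gaussianReal]

lemma integral_secondChaos_diagonal_pow_four_le :
    ∫ x, secondChaos (Matrix.diagonal l) x ^ 4 ∂stdGaussianPi ι ≤
      15 * Var[secondChaos (Matrix.diagonal l); stdGaussianPi ι] ^ 2 := by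
  rw [secondChaos_diagonal]
  refine integral_sum_pow_four_le_pi
    (fun i ↦ memLp_mul_sq_sub_one_gaussianReal (l i) ENNReal.ofNat_ne_top)
    (fun i ↦ integral_mul_sq_sub_one_gaussianReal (l i)) (by norm_num) fun i ↦ ?_
  rw [integral_mul_sq_sub_one_pow_four_gaussianReal, variance_mul_sq_sub_one_gaussianReal]
  exact le_of_eq (by ring)

end DiagonalChaos

section SymmetricChaos

variable {ι : Type*} [Fintype ι] {A : Matrix ι ι ℝ}

lemma secondChaos_mulVec [DecidableEq ι] (U : Matrix.unitaryGroup ι ℝ) (x : ι → ℝ) :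
    secondChaos A ((U : Matrix ι ι ℝ) *ᵥ x) =
      secondChaos (Unitary.conjStarAlgAut ℝ _ (star U) A) x := by
  have hstar : star (U : Matrix ι ι ℝ) = (U : Matrix ι ι ℝ)ᵀ := rfl
  rw [secondChaos_eq_dotProduct_mulVec_sub_trace, secondChaos_eq_dotProduct_mulVec_sub_trace,
    trace_conjStarAlgAut, Unitary.conjStarAlgAut_star_apply, hstar]
  simp only [← Matrix.mulVec_mulVec, Matrix.dotProduct_mulVec, Matrix.vecMul_transpose]

theorem identDistrib_secondChaos_diagonal_eigenvalues [DecidableEq ι] (hA : A.IsHermitian) :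
    IdentDistrib (secondChaos (Matrix.diagonal hA.eigenvalues)) (secondChaos A)
      (stdGaussianPi ι) (stdGaussianPi ι) := by
  have hrotation := measurePreserving_mulVec_stdGaussianPi hA.eigenvectorUnitary
  have hchaos : secondChaos (Matrix.diagonal hA.eigenvalues) =
      secondChaos A ∘ fun x ↦ (hA.eigenvectorUnitary : Matrix ι ι ℝ) *ᵥ x := by
    ext x
    rw [Function.comp_apply, secondChaos_mulVec, hA.conjStarAlgAut_star_eigenvectorUnitary]
    rfl
  refine ⟨(measurable_secondChaos _).aemeasurable, (measurable_secondChaos A).aemeasurable, ?_⟩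
  rw [hchaos, ← Measure.map_map (measurable_secondChaos A) hrotation.measurable, hrotation.map_eq]

lemma memLp_secondChaos (hA : A.IsSymm) {p : ℝ≥0∞} (hp : p ≠ ∞) :
    MemLp (secondChaos A) p (stdGaussianPi ι) := by
  classical
  exact (identDistrib_secondChaos_diagonal_eigenvalues
    (Matrix.isHermitian_iff_isSymm.mpr hA)).memLp_snd (memLp_secondChaos_diagonal _ hp)

lemma integral_secondChaos (hA : A.IsSymm) : (stdGaussianPi ι)[secondChaos A] = 0 := by
  classical
  have hlaw := identDistrib_secondChaos_diagonal_eigenvalues (Matrix.isHermitian_iff_isSymm.mpr hA)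
  rw [← hlaw.integral_eq, integral_secondChaos_diagonal]

theorem variance_secondChaos (hA : A.IsSymm) :
    Var[secondChaos A; stdGaussianPi ι] = 2 * ∑ i, ∑ j, A i j ^ 2 := by
  classical
  have hA' : A.IsHermitian := Matrix.isHermitian_iff_isSymm.mpr hA
  rw [← (identDistrib_secondChaos_diagonal_eigenvalues hA').variance_eq,
    variance_secondChaos_diagonal, sum_sum_sq_eq_sum_eigenvalues_sq hA']

theorem integral_secondChaos_pow_four_le (hA : A.IsSymm) :
    ∫ x, secondChaos A x ^ 4 ∂stdGaussianPi ι ≤ 15 * Var[secondChaos A; stdGaussianPi ι] ^ 2 := by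
  classical
  have hlaw := identDistrib_secondChaos_diagonal_eigenvalues (Matrix.isHermitian_iff_isSymm.mpr hA)
  rw [← (hlaw.pow (n := 4)).integral_eq, ← hlaw.variance_eq]
  exact integral_secondChaos_diagonal_pow_four_le _

end SymmetricChaos

theorem stmt12_general {ι : Type*} [Fintype ι] {V : Matrix ι ι ℝ} (hV : V.IsSymm) {θ : ℝ}
    (hθ₀ : 0 ≤ θ) (hθ₁ : θ ≤ 1) :
    (1 - θ) ^ 2 / 15
      ≤ (stdGaussianPi ι).real {a | θ * (2 * ∑ i, ∑ j, V i j ^ 2) ≤ secondChaos V a ^ 2} := by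
  rw [← variance_secondChaos hV]
  exact le_measureReal_le_sq_of_fourth_moment_le (memLp_secondChaos hV ENNReal.ofNat_ne_top)
    (integral_secondChaos hV) (by norm_num) (integral_secondChaos_pow_four_le hV) hθ₀ hθ₁

/-- Small-ball bound: for `a ~ N(0, I_n)` and symmetric `V` with `‖V‖_F = 1`,
`P(|⟨aaᵀ − I, V⟩|² ≥ 1) ≥ 1/324`. -/
theorem stmt12 {n : ℕ} (V : Matrix (Fin n) (Fin n) ℝ) (hV : V.IsSymm)
    (hVF : Real.sqrt (∑ i, ∑ j, V i j ^ 2) = 1) :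
    ENNReal.ofReal (1 / 324)
      ≤ (Measure.pi fun _ : Fin n => gaussianReal 0 1)
          {a : Fin n → ℝ |
            1 ≤ ((∑ i, ∑ j, a i * V i j * a j) - V.trace) ^ 2} := by
  have hsmallBall := stmt12_general hV (θ := 1 / 2) (by norm_num) (by norm_num)
  rw [Real.sqrt_eq_one.mp hVF, mul_one, one_div_mul_cancel two_ne_zero] at hsmallBall
  exact ENNReal.ofReal_le_of_le_toReal (le_trans (by norm_num) hsmallBall)
end

section
/- Let H̃ = Σᵢ₌₁ᵐ pᵢεᵢaᵢaᵢᵀ where a₁,…,a_m are i.i.d. N(0,I_n), ε₁,…,ε_m are i.i.d. Rademacher independent of the aᵢ, and p ∈ ℝᵐ is fixed. Then there exists a universal constant C > 0 such that, for sufficiently large n, E[‖H̃‖₂] ≤ C·(‖p‖₂·√n + ‖p‖_∞·n), where ‖·‖₂ is the spectral norm. -/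
open MeasureTheory ProbabilityTheory

/-- The Rademacher distribution on `ℝ`: `±1` with probability `1/2` each. -/
noncomputable def rademacher : Measure ℝ :=
  (1 / 2 : ENNReal) • Measure.dirac (1 : ℝ) + (1 / 2 : ENNReal) • Measure.dirac (-1 : ℝ)

/-- Spectral norm of a real square matrix. -/
noncomputable def specNorm {ι : Type*} [Fintype ι] [DecidableEq ι]
    (M : Matrix ι ι ℝ) : ℝ :=
  ‖Matrix.toEuclideanCLM (𝕜 := ℝ) M‖

/-!
The expected norm is bounded through the exponential moment of `‖H‖`. A symmetric operator `T`
satisfies `‖T‖ ≤ 4 |⟪T u, u⟫|` on a ball of radius `1/5` contained in the unit ball, so `exp ‖T‖` is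
at most `5ⁿ` times the average of `exp (4 |⟪T u, u⟫|)` over the unit ball. This average plays the
role of a union bound over a net. By Tonelli it remains to bound the exponential moment in
a fixed direction `u`, where `⟪H u, u⟫ = ∑ pₖ εₖ ⟪aₖ, u⟫²` is a sum of independent terms, each of
which is a randomly signed square of a Gaussian: the signs kill the first-order term, leaving
`exp (O(∑ pₖ²))`. Rescaling `p` so that the exponent is `O(n)` and applying Jensen's inequality
finishes the proof.
-/

open scoped ENNReal NNReal RealInnerProductSpace

section SymmetricOperator

variable {E : Type*} [NormedAddCommGroup E] [InnerProductSpace ℝ E] {T : E →L[ℝ] E}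

lemma exists_norm_eq_one_mul_norm_le_abs_inner (hT : (T : E →ₗ[ℝ] E).IsSymmetric) (hT0 : T ≠ 0)
    {c : ℝ} (hc0 : 0 ≤ c) (hc1 : c < 1) : ∃ v : E, ‖v‖ = 1 ∧ c * ‖T‖ ≤ |⟪T v, v⟫| := by
  have hlt : c * ‖T‖ < ⨆ x, |T.rayleighQuotient x| := by
    rw [← T.norm_eq_iSup_rayleighQuotient hT]
    exact mul_lt_of_lt_one_left (norm_pos_iff.2 hT0) hc1
  obtain ⟨x, hx⟩ := exists_lt_of_lt_ciSup hlt
  have hx0 : x ≠ 0 := by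
    rintro rfl
    rw [T.rayleighQuotient_apply_zero, abs_zero] at hx
    exact hx.not_ge (by positivity)
  have hnorm : ‖‖x‖⁻¹ • x‖ = 1 := norm_smul_inv_norm (𝕜 := ℝ) hx0
  refine ⟨‖x‖⁻¹ • x, hnorm, ?_⟩
  rw [← T.rayleigh_smul x (inv_ne_zero (norm_ne_zero_iff.2 hx0))] at hx
  simpa [ContinuousLinearMap.rayleighQuotient, hnorm,
    ContinuousLinearMap.reApplyInnerSelf_apply] using hx.le

lemma abs_inner_sub_inner_le (hT : (T : E →ₗ[ℝ] E).IsSymmetric) (u v : E) :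
    |⟪T u, u⟫ - ⟪T v, v⟫| ≤ ‖T‖ * ‖u - v‖ * ‖u + v‖ := by
  have hsymm : ⟪T v, u⟫ = ⟪T u, v⟫ := (hT v u).trans (real_inner_comm _ _)
  have hfactor : ⟪T u, u⟫ - ⟪T v, v⟫ = ⟪T (u - v), u + v⟫ := by
    rw [map_sub, inner_sub_left, inner_add_right, inner_add_right, hsymm]
    ring
  rw [hfactor]
  exact (abs_real_inner_le_norm _ _).trans (by gcongr; exact T.le_opNorm _)

lemma exists_ball_norm_le_abs_inner (hT : (T : E →ₗ[ℝ] E).IsSymmetric) :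
    ∃ w : E, Metric.ball w (1 / 5) ⊆ Metric.ball 0 1 ∧
      ∀ u ∈ Metric.ball w (1 / 5), ‖T‖ ≤ 4 * |⟪T u, u⟫| := by
  rcases eq_or_ne T 0 with rfl | hT0
  · exact ⟨0, Metric.ball_subset_ball (by norm_num), fun u _ => by simp⟩
  -- The constant `61/64` is chosen so that `61/64 * (4/5)² = 1/4 + 1/5 * 9/5`.
  obtain ⟨v, hv, hvT⟩ := exists_norm_eq_one_mul_norm_le_abs_inner hT hT0
    (show (0 : ℝ) ≤ 61 / 64 by norm_num) (by norm_num)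
  have hw : ‖(4 / 5 : ℝ) • v‖ = 4 / 5 := by rw [norm_smul, hv]; norm_num
  have hwT : 61 / 100 * ‖T‖ ≤ |⟪T ((4 / 5 : ℝ) • v), (4 / 5 : ℝ) • v⟫| := by
    rw [map_smul, real_inner_smul_left, real_inner_smul_right, ← mul_assoc, abs_mul,
      abs_of_pos (by norm_num : (0 : ℝ) < 4 / 5 * (4 / 5))]
    linarith
  set w := (4 / 5 : ℝ) • v
  refine ⟨w, Metric.ball_subset_ball' (by rw [dist_zero_right, hw]; norm_num), fun u hu => ?_⟩
  have huw : ‖u - w‖ ≤ 1 / 5 := (mem_ball_iff_norm.1 hu).le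
  have huw' : ‖u + w‖ ≤ 9 / 5 :=
    calc ‖u + w‖ = ‖(u - w) + w + w‖ := by rw [sub_add_cancel]
      _ ≤ ‖u - w‖ + ‖w‖ + ‖w‖ := norm_add₃_le
      _ ≤ 9 / 5 := by linarith
  have hdiff : |⟪T w, w⟫ - ⟪T u, u⟫| ≤ 9 / 25 * ‖T‖ :=
    calc |⟪T w, w⟫ - ⟪T u, u⟫| = |⟪T u, u⟫ - ⟪T w, w⟫| := abs_sub_comm _ _
      _ ≤ ‖T‖ * ‖u - w‖ * ‖u + w‖ := abs_inner_sub_inner_le hT u w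
      _ ≤ ‖T‖ * (1 / 5) * (9 / 5) := by gcongr
      _ = 9 / 25 * ‖T‖ := by ring
  linarith [abs_sub_abs_le_abs_sub ⟪T w, w⟫ ⟪T u, u⟫]

variable [FiniteDimensional ℝ E] [MeasurableSpace E] [BorelSpace E]

lemma exp_norm_mul_volume_ball_le (hT : (T : E →ₗ[ℝ] E).IsSymmetric) :
    ENNReal.ofReal (Real.exp ‖T‖) * volume (Metric.ball (0 : E) (1 / 5))
      ≤ ∫⁻ u in Metric.ball 0 1, ENNReal.ofReal (Real.exp (4 * |⟪T u, u⟫|)) := by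
  obtain ⟨w, hw, hwT⟩ := exists_ball_norm_le_abs_inner hT
  calc ENNReal.ofReal (Real.exp ‖T‖) * volume (Metric.ball (0 : E) (1 / 5))
      = ∫⁻ _ in Metric.ball w (1 / 5), ENNReal.ofReal (Real.exp ‖T‖) := by
        rw [setLIntegral_const, Measure.addHaar_ball_center _ w]
    _ ≤ ∫⁻ u in Metric.ball w (1 / 5), ENNReal.ofReal (Real.exp (4 * |⟪T u, u⟫|)) := by
        refine setLIntegral_mono' Metric.isOpen_ball.measurableSet fun u hu => ?_
        gcongr
        exact hwT u hu
    _ ≤ _ := lintegral_mono_set hw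

lemma lintegral_exp_norm_le {Ω : Type*} [MeasurableSpace Ω] {P : Measure Ω} [SFinite P]
    {T : Ω → E →L[ℝ] E} (hT : ∀ ω, (T ω : E →ₗ[ℝ] E).IsSymmetric)
    (hmeas : Measurable fun x : Ω × E => ⟪T x.1 x.2, x.2⟫) {B : ℝ≥0∞}
    (hB : ∀ u : E, ‖u‖ ≤ 1 →
      ∫⁻ ω, ENNReal.ofReal (Real.exp (4 * |⟪T ω u, u⟫|)) ∂P ≤ B) :
    ∫⁻ ω, ENNReal.ofReal (Real.exp ‖T ω‖) ∂P ≤ 5 ^ Module.finrank ℝ E * B := by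
  set b := volume (Metric.ball (0 : E) (1 / 5))
  have hb0 : b ≠ 0 := (Metric.measure_ball_pos _ _ (by norm_num)).ne'
  have hb_top : b ≠ ∞ := measure_ball_lt_top.ne
  have hball : volume (Metric.ball (0 : E) 1) = 5 ^ Module.finrank ℝ E * b := by
    have h := Measure.addHaar_ball_mul_of_pos (volume : Measure E) 0 (r := 5) (by norm_num) (1 / 5)
    rwa [mul_one_div_cancel (by norm_num), ENNReal.ofReal_pow (by norm_num),
      ENNReal.ofReal_ofNat] at h
  have hexp_meas : Measurable fun x : Ω × E =>
      ENNReal.ofReal (Real.exp (4 * |⟪T x.1 x.2, x.2⟫|)) := by fun_prop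
  refine (ENNReal.mul_le_mul_iff_left hb0 hb_top).1 ?_
  calc (∫⁻ ω, ENNReal.ofReal (Real.exp ‖T ω‖) ∂P) * b
      = ∫⁻ ω, ENNReal.ofReal (Real.exp ‖T ω‖) * b ∂P := (lintegral_mul_const' _ _ hb_top).symm
    _ ≤ ∫⁻ ω, ∫⁻ u in Metric.ball (0 : E) 1,
          ENNReal.ofReal (Real.exp (4 * |⟪T ω u, u⟫|)) ∂volume ∂P :=
        lintegral_mono fun ω => exp_norm_mul_volume_ball_le (hT ω)
    _ = ∫⁻ u in Metric.ball (0 : E) 1, ∫⁻ ω, ENNReal.ofReal (Real.exp (4 * |⟪T ω u, u⟫|)) ∂P :=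
        lintegral_lintegral_swap hexp_meas.aemeasurable
    _ ≤ ∫⁻ _ in Metric.ball (0 : E) 1, B :=
        setLIntegral_mono' Metric.isOpen_ball.measurableSet fun u hu =>
          hB u (mem_ball_zero_iff.1 hu).le
    _ = 5 ^ Module.finrank ℝ E * B * b := by rw [setLIntegral_const, hball]; ring

end SymmetricOperator

section ExponentialMoment

variable {Ω : Type*} [MeasurableSpace Ω] {P : Measure Ω}

lemma integrable_and_integral_le_of_lintegral_exp_le [IsProbabilityMeasure P] {X : Ω → ℝ}
    (hX : AEStronglyMeasurable X P) (hX0 : 0 ≤ X) {K : ℝ}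
    (hK : ∫⁻ ω, ENNReal.ofReal (Real.exp (X ω)) ∂P ≤ ENNReal.ofReal (Real.exp K)) :
    Integrable X P ∧ ∫ ω, X ω ∂P ≤ K := by
  have hexp_meas : AEStronglyMeasurable (fun ω => Real.exp (X ω)) P :=
    Real.continuous_exp.comp_aestronglyMeasurable hX
  have hexp_nonneg : 0 ≤ᵐ[P] fun ω => Real.exp (X ω) := ae_of_all _ fun _ => (Real.exp_pos _).le
  have hexp : Integrable (fun ω => Real.exp (X ω)) P :=
    (lintegral_ofReal_ne_top_iff_integrable hexp_meas hexp_nonneg).1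
      (hK.trans_lt ENNReal.ofReal_lt_top).ne
  have hint : Integrable X P := hexp.mono' hX <| ae_of_all _ fun ω => by
    rw [Real.norm_of_nonneg (hX0 ω)]
    linarith [Real.add_one_le_exp (X ω)]
  have hjensen : Real.exp (∫ ω, X ω ∂P) ≤ ∫ ω, Real.exp (X ω) ∂P :=
    convexOn_exp.map_integral_le Real.continuous_exp.continuousOn isClosed_univ
      (ae_of_all _ fun _ => Set.mem_univ _) hint hexp
  have hmean : ∫ ω, Real.exp (X ω) ∂P ≤ Real.exp K := by
    rw [integral_eq_lintegral_of_nonneg_ae hexp_nonneg hexp_meas]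
    exact ENNReal.toReal_le_of_le_ofReal (Real.exp_pos K).le hK
  exact ⟨hint, Real.exp_le_exp.1 (hjensen.trans hmean)⟩

lemma lintegral_exp_abs_le {X : Ω → ℝ} (hX : Measurable X) :
    ∫⁻ ω, ENNReal.ofReal (Real.exp |X ω|) ∂P
      ≤ ∫⁻ ω, ENNReal.ofReal (Real.exp (X ω)) ∂P + ∫⁻ ω, ENNReal.ofReal (Real.exp (-X ω)) ∂P := by
  rw [← lintegral_add_left (by fun_prop)]
  refine lintegral_mono fun ω => ?_
  rw [← ENNReal.ofReal_add (Real.exp_pos _).le (Real.exp_pos _).le]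
  exact ENNReal.ofReal_le_ofReal (Real.exp_abs_le _)

end ExponentialMoment

section ProductMeasure

lemma lintegral_pi_prod_eq_prod_lintegral {κ : Type*} [Fintype κ] {α : κ → Type*}
    [∀ k, MeasurableSpace (α k)] (μ : ∀ k, Measure (α k)) [∀ k, IsProbabilityMeasure (μ k)]
    {f : ∀ k, α k → ℝ≥0∞} (hf : ∀ k, Measurable (f k)) :
    ∫⁻ x, ∏ k, f k (x k) ∂Measure.pi μ = ∏ k, ∫⁻ x, f k x ∂μ k := by
  rw [lintegral_prod_eq_prod_lintegral_of_indepFun Finset.univ (fun k (x : ∀ k, α k) => f k (x k))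
    (iIndepFun_pi fun k => (hf k).aemeasurable) fun k => (hf k).comp (measurable_pi_apply k)]
  exact Finset.prod_congr rfl fun k _ => (measurePreserving_eval μ k).lintegral_comp (hf k)

lemma lintegral_prod_pi_eq_prod_lintegral {κ : Type*} [Fintype κ] {α β : Type*}
    [MeasurableSpace α] [MeasurableSpace β] (μ : κ → Measure α) (ν : κ → Measure β)
    [∀ k, IsProbabilityMeasure (μ k)] [∀ k, IsProbabilityMeasure (ν k)]
    {f : κ → α × β → ℝ≥0∞} (hf : ∀ k, Measurable (f k)) :
    ∫⁻ ω, ∏ k, f k (ω.1 k, ω.2 k) ∂(Measure.pi μ).prod (Measure.pi ν)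
      = ∏ k, ∫⁻ z, f k z ∂(μ k).prod (ν k) := by
  rw [← lintegral_pi_prod_eq_prod_lintegral (fun k => (μ k).prod (ν k)) hf,
    ← (measurePreserving_arrowProdEquivProdArrow α β κ μ ν).lintegral_comp (by fun_prop)]
  rfl

end ProductMeasure

section GaussianChaos

instance : IsProbabilityMeasure rademacher where
  measure_univ := by simp [rademacher, ENNReal.inv_two_add_inv_two]

lemma lintegral_rademacher (f : ℝ → ℝ≥0∞) : ∫⁻ ε, f ε ∂rademacher = (f 1 + f (-1)) / 2 := by
  simp [rademacher, lintegral_add_measure, mul_add, ENNReal.div_eq_inv_mul]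

lemma lintegral_exp_mul_sq_gaussianReal {v : ℝ≥0} {s : ℝ} (hs : 2 * s * v < 1) :
    ∫⁻ x, ENNReal.ofReal (Real.exp (s * x ^ 2)) ∂gaussianReal 0 v
      = ENNReal.ofReal (√(1 - 2 * s * v))⁻¹ := by
  rcases eq_or_ne v 0 with rfl | hv
  · simp
  have : (0 : ℝ) < v := by positivity
  have hrate : 0 < (2 * v : ℝ)⁻¹ - s := by
    rw [sub_pos, ← one_div, lt_div_iff₀ (by positivity)]
    linarith
  have hdensity (x : ℝ) : gaussianPDF 0 v x * ENNReal.ofReal (Real.exp (s * x ^ 2))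
      = ENNReal.ofReal ((√(2 * Real.pi * v))⁻¹ * Real.exp (-((2 * v : ℝ)⁻¹ - s) * x ^ 2)) := by
    rw [gaussianPDF, ← ENNReal.ofReal_mul (gaussianPDFReal_nonneg _ _ _), gaussianPDFReal,
      mul_assoc, ← Real.exp_add]
    ring_nf
  rw [gaussianReal_of_var_ne_zero _ hv,
    lintegral_withDensity_eq_lintegral_mul _ (measurable_gaussianPDF _ _) (by fun_prop)]
  simp only [Pi.mul_apply, hdensity]
  rw [← ofReal_integral_eq_lintegral_ofReal ((integrable_exp_neg_mul_sq hrate).const_mul _)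
    (ae_of_all _ fun x => by positivity), integral_const_mul, integral_gaussian, ← Real.sqrt_inv,
    ← Real.sqrt_inv, ← Real.sqrt_mul (by positivity)]
  congr 2
  have : 1 - 2 * s * v ≠ 0 := by linarith
  field_simp

lemma inv_sqrt_add_inv_sqrt_le {t : ℝ} (ht : |t| ≤ 1 / 4) :
    ((√(1 - 2 * t))⁻¹ + (√(1 + 2 * t))⁻¹) / 2 ≤ Real.exp (4 * t ^ 2) := by
  obtain ⟨ht1, ht2⟩ := abs_le.1 ht
  have hsub : 0 < 1 - 2 * t := by linarith
  have hadd : 0 < 1 + 2 * t := by linarith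
  have ht_sq : t ^ 2 ≤ 1 / 16 := by nlinarith
  refine le_of_sq_le_sq ?_ (Real.exp_pos _).le
  calc (((√(1 - 2 * t))⁻¹ + (√(1 + 2 * t))⁻¹) / 2) ^ 2
      ≤ ((√(1 - 2 * t))⁻¹ ^ 2 + (√(1 + 2 * t))⁻¹ ^ 2) / 2 := by
        linarith [sq_nonneg ((√(1 - 2 * t))⁻¹ - (√(1 + 2 * t))⁻¹)]
    _ = (1 - 4 * t ^ 2)⁻¹ := by
        rw [inv_pow, inv_pow, Real.sq_sqrt hsub.le, Real.sq_sqrt hadd.le]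
        rw [show 1 - 4 * t ^ 2 = (1 - 2 * t) * (1 + 2 * t) by ring]
        field_simp
        ring
    _ ≤ 8 * t ^ 2 + 1 := by
        rw [inv_le_iff_one_le_mul₀ (by linarith)]
        nlinarith [mul_nonneg (sq_nonneg t) (sub_nonneg.2 ht_sq)]
    _ ≤ Real.exp (8 * t ^ 2) := Real.add_one_le_exp _
    _ = Real.exp (4 * t ^ 2) ^ 2 := by rw [← Real.exp_nat_mul]; ring_nf

lemma lintegral_exp_mul_rademacher_mul_sq_gaussianReal_le {v : ℝ≥0} {s : ℝ}
    (hs : |s * v| ≤ 1 / 4) :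
    ∫⁻ z, ENNReal.ofReal (Real.exp (s * z.2 * z.1 ^ 2)) ∂(gaussianReal 0 v).prod rademacher
      ≤ ENNReal.ofReal (Real.exp (4 * (s * v) ^ 2)) := by
  obtain ⟨hs1, hs2⟩ := abs_le.1 hs
  rw [lintegral_prod_symm _ (by fun_prop), lintegral_rademacher]
  simp only [mul_one, mul_neg]
  rw [lintegral_exp_mul_sq_gaussianReal (by linarith), lintegral_exp_mul_sq_gaussianReal
    (by linarith), ← ENNReal.ofReal_add (by positivity) (by positivity),
    ← ENNReal.ofReal_ofNat 2, ← ENNReal.ofReal_div_of_pos two_pos]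
  refine ENNReal.ofReal_le_ofReal (le_of_eq_of_le ?_ (inv_sqrt_add_inv_sqrt_le hs))
  ring_nf

lemma measurePreserving_dotProduct_pi_gaussianReal {ι : Type*} [Fintype ι]
    (u : EuclideanSpace ℝ ι) :
    MeasurePreserving (fun a => a ⬝ᵥ u.ofLp) (Measure.pi fun _ : ι => gaussianReal 0 1)
      (gaussianReal 0 (‖u‖₊ ^ 2)) := by
  have hinner : (fun a : ι → ℝ => a ⬝ᵥ u.ofLp) = innerSL ℝ u ∘ WithLp.toLp 2 := by
    ext a
    simp [EuclideanSpace.inner_eq_star_dotProduct]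
  refine ⟨by fun_prop, ?_⟩
  rw [hinner, ← Measure.map_map (by fun_prop) (by fun_prop), map_pi_eq_stdGaussian,
    IsGaussian.map_eq_gaussianReal, integral_strongDual_stdGaussian, variance_dual_stdGaussian,
    innerSL_apply_norm, ← coe_nnnorm, ← NNReal.coe_pow, Real.toNNReal_coe]

lemma lintegral_exp_mul_rademacher_mul_dotProduct_sq_le {ι : Type*} [Fintype ι]
    {u : EuclideanSpace ℝ ι} {s : ℝ} (hs : |s * ‖u‖ ^ 2| ≤ 1 / 4) :
    ∫⁻ z, ENNReal.ofReal (Real.exp (s * z.2 * (z.1 ⬝ᵥ u.ofLp) ^ 2))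
        ∂(Measure.pi fun _ : ι => gaussianReal 0 1).prod rademacher
      ≤ ENNReal.ofReal (Real.exp (4 * (s * ‖u‖ ^ 2) ^ 2)) := by
  have hmap := ((measurePreserving_dotProduct_pi_gaussianReal u).prod
    (.id rademacher)).lintegral_comp
      (f := fun z : ℝ × ℝ => ENNReal.ofReal (Real.exp (s * z.2 * z.1 ^ 2))) (by fun_prop)
  have hcast : ((‖u‖₊ ^ 2 : ℝ≥0) : ℝ) = ‖u‖ ^ 2 := by simp
  rw [← hcast] at hs ⊢
  exact hmap.trans_le (lintegral_exp_mul_rademacher_mul_sq_gaussianReal_le hs)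

/-- The joint law of a family of independent standard Gaussian vectors of `ℝ^ι` and an independent
family of independent Rademacher signs, both indexed by `κ`. -/
noncomputable def gaussianRademacher (ι κ : Type*) [Fintype ι] [Fintype κ] :
    Measure ((κ → ι → ℝ) × (κ → ℝ)) :=
  (Measure.pi fun _ : κ => Measure.pi fun _ : ι => gaussianReal 0 1).prod
    (Measure.pi fun _ : κ => rademacher)

variable {ι κ : Type*} [Fintype ι] [Fintype κ]

instance : IsProbabilityMeasure (gaussianRademacher ι κ) := by
  unfold gaussianRademacher
  infer_instance

lemma lintegral_exp_signed_sum_sq_le {c : κ → ℝ} {u : EuclideanSpace ℝ ι}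
    (hc : ∀ k, |c k * ‖u‖ ^ 2| ≤ 1 / 4) :
    ∫⁻ ω, ENNReal.ofReal (Real.exp (∑ k, c k * ω.2 k * (ω.1 k ⬝ᵥ u.ofLp) ^ 2))
        ∂gaussianRademacher ι κ
      ≤ ENNReal.ofReal (Real.exp (4 * ‖u‖ ^ 4 * ∑ k, c k ^ 2)) := by
  simp only [Real.exp_sum, ENNReal.ofReal_prod_of_nonneg fun _ _ => (Real.exp_pos _).le]
  calc _ = ∏ k, ∫⁻ z, ENNReal.ofReal (Real.exp (c k * z.2 * (z.1 ⬝ᵥ u.ofLp) ^ 2))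
        ∂(Measure.pi fun _ : ι => gaussianReal 0 1).prod rademacher :=
        lintegral_prod_pi_eq_prod_lintegral _ _
          (f := fun k z => ENNReal.ofReal (Real.exp (c k * z.2 * (z.1 ⬝ᵥ u.ofLp) ^ 2)))
          fun k => by fun_prop
    _ ≤ ∏ k, ENNReal.ofReal (Real.exp (4 * (c k * ‖u‖ ^ 2) ^ 2)) :=
        Finset.prod_le_prod' fun k _ => lintegral_exp_mul_rademacher_mul_dotProduct_sq_le (hc k)
    _ = ENNReal.ofReal (Real.exp (4 * ‖u‖ ^ 4 * ∑ k, c k ^ 2)) := by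
        rw [← ENNReal.ofReal_prod_of_nonneg fun _ _ => (Real.exp_pos _).le, ← Real.exp_sum,
          Finset.mul_sum]
        congr 2
        exact Finset.sum_congr rfl fun k _ => by ring

lemma lintegral_exp_abs_signed_sum_sq_le {c : κ → ℝ} {u : EuclideanSpace ℝ ι}
    (hc : ∀ k, |c k * ‖u‖ ^ 2| ≤ 1 / 4) :
    ∫⁻ ω, ENNReal.ofReal (Real.exp |∑ k, c k * ω.2 k * (ω.1 k ⬝ᵥ u.ofLp) ^ 2|)
        ∂gaussianRademacher ι κ
      ≤ 2 * ENNReal.ofReal (Real.exp (4 * ‖u‖ ^ 4 * ∑ k, c k ^ 2)) := by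
  have hneg := lintegral_exp_signed_sum_sq_le (c := -c) (u := u) (by simpa using hc)
  simp only [Pi.neg_apply, neg_mul, Finset.sum_neg_distrib, neg_sq] at hneg
  rw [two_mul]
  exact (lintegral_exp_abs_le (by fun_prop)).trans
    (add_le_add (lintegral_exp_signed_sum_sq_le hc) hneg)

end GaussianChaos

section WeightedGram

variable {ι κ : Type*} [Fintype κ]

/-- The matrix `∑ k, c k • a k (a k)ᵀ`, the weighted Gram matrix of the vectors `a k`. -/
def weightedGram (c : κ → ℝ) (a : κ → ι → ℝ) : Matrix ι ι ℝ :=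
  Matrix.of fun i j => ∑ k, c k * (a k i * a k j)

lemma weightedGram_smul (t : ℝ) (c : κ → ℝ) (a : κ → ι → ℝ) :
    weightedGram (t • c) a = t • weightedGram c a := by
  ext i j
  simp [weightedGram, Finset.mul_sum, mul_assoc]

lemma isHermitian_weightedGram (c : κ → ℝ) (a : κ → ι → ℝ) : (weightedGram c a).IsHermitian := by
  ext i j
  simp [weightedGram, mul_comm (a _ i)]

lemma continuous_weightedGram :
    Continuous fun x : (κ → ℝ) × (κ → ι → ℝ) => weightedGram x.1 x.2 := by
  unfold weightedGram
  fun_prop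

variable [Fintype ι] [DecidableEq ι]

lemma inner_toEuclideanCLM_weightedGram (c : κ → ℝ) (a : κ → ι → ℝ) (u : EuclideanSpace ℝ ι) :
    ⟪Matrix.toEuclideanCLM (𝕜 := ℝ) (weightedGram c a) u, u⟫
      = ∑ k, c k * (a k ⬝ᵥ u.ofLp) ^ 2 := by
  have hgram : weightedGram c a = ∑ k, c k • Matrix.vecMulVec (a k) (a k) := by
    ext i j
    simp [weightedGram, Matrix.sum_apply, Matrix.vecMulVec_apply]
  rw [real_inner_comm, Matrix.inner_toEuclideanCLM, hgram, Matrix.sum_mulVec, dotProduct_sum]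
  refine Finset.sum_congr rfl fun k _ => ?_
  rw [Matrix.smul_mulVec, Matrix.vecMulVec_mulVec, dotProduct_smul]
  simp [dotProduct_comm u.ofLp, sq]

lemma continuous_specNorm : Continuous (specNorm : Matrix ι ι ℝ → ℝ) :=
  (LinearMap.continuous_of_finiteDimensional
    (Matrix.toEuclideanCLM (n := ι) (𝕜 := ℝ)).toAlgEquiv.toLinearMap).norm

lemma specNorm_smul (t : ℝ) (M : Matrix ι ι ℝ) : specNorm (t • M) = |t| * specNorm M := by
  rw [specNorm, map_smul, norm_smul, Real.norm_eq_abs, specNorm]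

lemma specNorm_of_isEmpty [IsEmpty ι] (M : Matrix ι ι ℝ) : specNorm M = 0 := by
  rw [specNorm, Subsingleton.elim M 0, map_zero, norm_zero]

end WeightedGram

section ExpectedNorm

variable {ι κ : Type*} [Fintype ι] [DecidableEq ι] [Fintype κ]

lemma lintegral_exp_specNorm_weightedGram_le {c : κ → ℝ} (hc : ∀ k, |c k| ≤ 1 / 16) :
    ∫⁻ ω, ENNReal.ofReal (Real.exp (specNorm (weightedGram (c * ω.2) ω.1)))
        ∂gaussianRademacher ι κ
      ≤ 5 ^ Fintype.card ι * (2 * ENNReal.ofReal (Real.exp (64 * ∑ k, c k ^ 2))) := by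
  rw [← finrank_euclideanSpace (𝕜 := ℝ) (ι := ι)]
  have hquad (ω : (κ → ι → ℝ) × (κ → ℝ)) (u : EuclideanSpace ℝ ι) :
      4 * |⟪Matrix.toEuclideanCLM (𝕜 := ℝ) (weightedGram (c * ω.2) ω.1) u, u⟫|
        = |∑ k, 4 * c k * ω.2 k * (ω.1 k ⬝ᵥ u.ofLp) ^ 2| := by
    have hsum : ∑ k, 4 * c k * ω.2 k * (ω.1 k ⬝ᵥ u.ofLp) ^ 2
        = 4 * ∑ k, (c * ω.2) k * (ω.1 k ⬝ᵥ u.ofLp) ^ 2 := by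
      simp only [Finset.mul_sum, Pi.mul_apply, mul_assoc]
    rw [inner_toEuclideanCLM_weightedGram, hsum, abs_mul, abs_of_pos (zero_lt_four' ℝ)]
  refine lintegral_exp_norm_le (fun ω => ?_) ?_ fun u hu => ?_
  · exact Matrix.isSymmetric_toEuclideanLin_iff.2 (isHermitian_weightedGram _ _)
  · simp only [inner_toEuclideanCLM_weightedGram]
    fun_prop
  have hsmall (k : κ) : |4 * c k * ‖u‖ ^ 2| ≤ 1 / 4 :=
    calc |4 * c k * ‖u‖ ^ 2| = 4 * |c k| * ‖u‖ ^ 2 := by simp [abs_mul]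
      _ ≤ 4 * (1 / 16) * 1 ^ 2 := by gcongr; exact hc k
      _ = 1 / 4 := by norm_num
  have hexponent : 4 * ‖u‖ ^ 4 * ∑ k, (4 * c k) ^ 2 ≤ 64 * ∑ k, c k ^ 2 :=
    calc 4 * ‖u‖ ^ 4 * ∑ k, (4 * c k) ^ 2 ≤ 4 * 1 ^ 4 * ∑ k, (4 * c k) ^ 2 := by gcongr
      _ = 64 * ∑ k, c k ^ 2 := by simp only [mul_pow, ← Finset.mul_sum]; ring
  simp only [hquad]
  refine (lintegral_exp_abs_signed_sum_sq_le hsmall).trans ?_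
  gcongr

lemma five_pow_mul_two_mul_exp_le {n : ℕ} (hn : n ≠ 0) :
    (5 : ℝ) ^ n * (2 * Real.exp n) ≤ Real.exp (4 * n) := by
  have hten : (10 : ℝ) ≤ Real.exp 3 := by
    have he := Real.exp_one_gt_d9.le
    calc (10 : ℝ) ≤ 2.7182818283 ^ 3 := by norm_num
      _ ≤ Real.exp 1 ^ 3 := by gcongr
      _ = Real.exp 3 := by rw [← Real.exp_nat_mul]; norm_num
  calc (5 : ℝ) ^ n * (2 * Real.exp n) ≤ 5 ^ n * (2 ^ n * Real.exp n) := by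
        gcongr
        exact le_self_pow₀ one_le_two hn
    _ = 10 ^ n * Real.exp n := by rw [← mul_assoc, ← mul_pow]; norm_num
    _ ≤ Real.exp 3 ^ n * Real.exp n := by gcongr
    _ = Real.exp (4 * n) := by rw [← Real.exp_nat_mul, ← Real.exp_add]; ring_nf

lemma lintegral_exp_specNorm_weightedGram_le_exp_card [Nonempty ι] {c : κ → ℝ}
    (hc : ∀ k, |c k| ≤ 1 / 16) (hc_sq : 64 * ∑ k, c k ^ 2 ≤ Fintype.card ι) :
    ∫⁻ ω, ENNReal.ofReal (Real.exp (specNorm (weightedGram (c * ω.2) ω.1)))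
        ∂gaussianRademacher ι κ
      ≤ ENNReal.ofReal (Real.exp (4 * Fintype.card ι)) := by
  calc _ ≤ 5 ^ Fintype.card ι * (2 * ENNReal.ofReal (Real.exp (64 * ∑ k, c k ^ 2))) :=
        lintegral_exp_specNorm_weightedGram_le hc
    _ ≤ 5 ^ Fintype.card ι * (2 * ENNReal.ofReal (Real.exp (Fintype.card ι))) := by gcongr
    _ = ENNReal.ofReal (5 ^ Fintype.card ι * (2 * Real.exp (Fintype.card ι))) := by
        rw [ENNReal.ofReal_mul (by positivity), ENNReal.ofReal_mul zero_le_two,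
          ENNReal.ofReal_pow (by positivity), ENNReal.ofReal_ofNat, ENNReal.ofReal_ofNat]
    _ ≤ ENNReal.ofReal (Real.exp (4 * Fintype.card ι)) :=
        ENNReal.ofReal_le_ofReal (five_pow_mul_two_mul_exp_le Fintype.card_ne_zero)

lemma integrable_and_integral_specNorm_weightedGram_le [Nonempty ι] {p : κ → ℝ} {D : ℝ}
    (hD : 0 < D) (hp : ∀ k, |p k| ≤ D) (hp_sq : ∑ k, p k ^ 2 ≤ D ^ 2 * Fintype.card ι) :
    Integrable (fun ω => specNorm (weightedGram (p * ω.2) ω.1)) (gaussianRademacher ι κ) ∧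
      ∫ ω, specNorm (weightedGram (p * ω.2) ω.1) ∂gaussianRademacher ι κ
        ≤ 64 * D * Fintype.card ι := by
  set c : κ → ℝ := (16 * D)⁻¹ • p with hc_def
  have hc (k : κ) : |c k| ≤ 1 / 16 :=
    calc |c k| = (16 * D)⁻¹ * |p k| := by
          rw [hc_def, Pi.smul_apply, smul_eq_mul, abs_mul, abs_of_pos (by positivity)]
      _ ≤ (16 * D)⁻¹ * D := by gcongr; exact hp k
      _ = 1 / 16 := by field_simp
  have hc_sq : 64 * ∑ k, c k ^ 2 ≤ Fintype.card ι :=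
    calc 64 * ∑ k, c k ^ 2 = 64 * (16 * D)⁻¹ ^ 2 * ∑ k, p k ^ 2 := by
          simp only [hc_def, Pi.smul_apply, smul_eq_mul, mul_pow, ← Finset.mul_sum, mul_assoc]
      _ ≤ 64 * (16 * D)⁻¹ ^ 2 * (D ^ 2 * Fintype.card ι) := by gcongr
      _ = 1 / 4 * Fintype.card ι := by field_simp; norm_num
      _ ≤ Fintype.card ι := mul_le_of_le_one_left (by positivity) (by norm_num)
  have hscale (ω : (κ → ι → ℝ) × (κ → ℝ)) : specNorm (weightedGram (p * ω.2) ω.1)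
      = 16 * D * specNorm (weightedGram (c * ω.2) ω.1) := by
    have hpc : p = (16 * D) • c := by rw [hc_def, smul_inv_smul₀ (by positivity)]
    rw [hpc, smul_mul_assoc, weightedGram_smul, specNorm_smul, abs_of_pos (by positivity)]
  have hcont : Continuous fun ω : (κ → ι → ℝ) × (κ → ℝ) =>
      specNorm (weightedGram (c * ω.2) ω.1) :=
    continuous_specNorm.comp (continuous_weightedGram.comp
      (f := fun ω : (κ → ι → ℝ) × (κ → ℝ) => (c * ω.2, ω.1)) (by fun_prop))
  obtain ⟨hint, hle⟩ := integrable_and_integral_le_of_lintegral_exp_le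
    hcont.aestronglyMeasurable (fun _ => norm_nonneg _)
    (lintegral_exp_specNorm_weightedGram_le_exp_card hc hc_sq)
  simp only [hscale]
  refine ⟨hint.const_mul _, ?_⟩
  rw [integral_const_mul]
  calc 16 * D * _ ≤ 16 * D * (4 * Fintype.card ι) := by gcongr
    _ = 64 * D * Fintype.card ι := by ring

theorem stmt15_general (p : κ → ℝ) :
    Integrable (fun ω => specNorm (weightedGram (p * ω.2) ω.1)) (gaussianRademacher ι κ) ∧
      ∫ ω, specNorm (weightedGram (p * ω.2) ω.1) ∂gaussianRademacher ι κ
        ≤ 64 * (√(∑ k, p k ^ 2) * √(Fintype.card ι) + (⨆ k, |p k|) * Fintype.card ι) := by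
  rcases isEmpty_or_nonempty ι with hι | hι
  · simp [specNorm_of_isEmpty]
  have hcard : (0 : ℝ) < Fintype.card ι := by exact_mod_cast Fintype.card_pos
  have hsup_nonneg : 0 ≤ ⨆ k, |p k| := Real.iSup_nonneg fun k => abs_nonneg _
  have hle_sup (k : κ) : |p k| ≤ ⨆ k, |p k| :=
    le_ciSup (f := fun k => |p k|) (Set.finite_range _).bddAbove k
  rcases eq_or_ne p 0 with rfl | hp0
  · have hzero (a : κ → ι → ℝ) : weightedGram 0 a = 0 := by
      simpa using weightedGram_smul 0 0 a
    simp [hzero, specNorm]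
  obtain ⟨k, hk⟩ := Function.ne_iff.1 hp0
  have hsup_pos : 0 < ⨆ k, |p k| := (abs_pos.2 hk).trans_le (hle_sup k)
  set S := √(∑ k, p k ^ 2) with hS
  set M := ⨆ k, |p k|
  have hD : 0 < S / √(Fintype.card ι) + M := by positivity
  obtain ⟨hint, hle⟩ := integrable_and_integral_specNorm_weightedGram_le (ι := ι) hD
    (fun k => (hle_sup k).trans (le_add_of_nonneg_left (by positivity)))
    (calc ∑ k, p k ^ 2 = (S / √(Fintype.card ι)) ^ 2 * Fintype.card ι := by
            rw [div_pow, hS, Real.sq_sqrt (by positivity), Real.sq_sqrt hcard.le]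
            field_simp
      _ ≤ (S / √(Fintype.card ι) + M) ^ 2 * Fintype.card ι := by
            gcongr
            exact le_add_of_nonneg_right hsup_nonneg)
  refine ⟨hint, hle.trans_eq ?_⟩
  have hsqrt : S / √(Fintype.card ι) * Fintype.card ι = S * √(Fintype.card ι) := by
    rw [div_mul_eq_mul_div, mul_div_assoc, Real.div_sqrt]
  rw [mul_assoc, add_mul, hsqrt]

end ExpectedNorm

/-- For `H̃ = Σᵢ pᵢεᵢaᵢaᵢᵀ` with `aᵢ` i.i.d. `N(0,I_n)`, `εᵢ` i.i.d. Rademacher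
independent of the `aᵢ`, and fixed `p ∈ ℝᵐ`: there is a universal constant `C > 0`
such that for all sufficiently large `n`,
`E[‖H̃‖₂] ≤ C·(‖p‖₂·√n + ‖p‖_∞·n)`. -/
theorem stmt15 :
    ∃ C : ℝ, 0 < C ∧ ∃ N : ℕ, ∀ n : ℕ, N ≤ n → ∀ (m : ℕ) (p : Fin m → ℝ),
      ∫ ω : (Fin m → Fin n → ℝ) × (Fin m → ℝ),
          specNorm (Matrix.of fun i j : Fin n => ∑ k, p k * ω.2 k * (ω.1 k i * ω.1 k j))
          ∂((Measure.pi fun _ : Fin m => Measure.pi fun _ : Fin n => gaussianReal 0 1).prod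
              (Measure.pi fun _ : Fin m => rademacher))
        ≤ C * (Real.sqrt (∑ i, p i ^ 2) * Real.sqrt n + (⨆ i, |p i|) * n) := by
  refine ⟨64, by norm_num, 0, fun n _ m p => ?_⟩
  have bound := (stmt15_general (ι := Fin n) p).2
  rw [Fintype.card_fin] at bound
  exact bound
end
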